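/- If T is a unimodal map with exp(h_top(T)) > √2, then the core inverse limit space X' = lim←([T²(c),T(c)],T) is indecomposable, i.e., X' cannot be written as the union of two proper subcontinua. -/

import Mathlib

/-- `T : ℝ → ℝ` is a unimodal map on `[0,1]` with critical point `c`. -/
def IsUnimodal (T : ℝ → ℝ) (c : ℝ) : Prop :=
  ContinuousOn T (Set.Icc 0 1) ∧ Set.MapsTo T (Set.Icc 0 1) (Set.Icc 0 1) ∧
    T 0 = 0 ∧ 0 < c ∧ c < 1 ∧
    StrictMonoOn T (Set.Icc 0 c) ∧ StrictAntiOn T (Set.Icc c 1)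

/-- The core inverse limit `X' = lim←([T²(c), T(c)], T)`, modelled as sequences
`x : ℕ → ℝ` where `x n` represents the coordinate `x_{-n}`, all lying in the
core interval `[T²(c), T(c)]`. It carries the product topology (as a subset of `ℕ → ℝ`). -/
def coreInvLimitSet (T : ℝ → ℝ) (c : ℝ) : Set (ℕ → ℝ) :=
  {x | (∀ n, x n ∈ Set.Icc (T (T c)) (T c)) ∧ ∀ n, T (x (n + 1)) = x n}

/-- A set `K` (in a topological space) is indecomposable if it cannot be written as the
union of two proper subcontinua, where a subcontinuum is a nonempty compact connected subset. -/
def IsIndecomposable {Z : Type*} [TopologicalSpace Z] (K : Set Z) : Prop :=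
  ¬ ∃ A B : Set Z, A ⊆ K ∧ B ⊆ K ∧ IsCompact A ∧ IsConnected A ∧ IsCompact B ∧ IsConnected B ∧
      A ≠ K ∧ B ≠ K ∧ A ∪ B = K

/-- the word `w` (true = right of `c`, false = left of `c`) is an admissible itinerary for `x` -/
def adm (T : ℝ → ℝ) (c : ℝ) : List Bool → ℝ → Prop
  | [], _ => True
  | s :: w, x => (s = true → c ≤ x) ∧ (s = false → x ≤ c) ∧ adm T c w (T x)

/-- signed sum of the discretised orbit -/
noncomputable def sg (T : ℝ → ℝ) (M : ℕ) : List Bool → ℝ → ℤ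
  | [], _ => 0
  | s :: w, x => ⌊(M : ℝ) * x⌋ + (if s then -1 else 1) * sg T M w (T x)

/-- `S` is covered by `m` admissible words of length `n` -/
def Cov (T : ℝ → ℝ) (c : ℝ) (S : Set ℝ) (n m : ℕ) : Prop :=
  ∃ W : Finset (List Bool), W.card ≤ m ∧ (∀ w ∈ W, w.length = n) ∧ ∀ x ∈ S, ∃ w ∈ W, adm T c w x

lemma sg_mono {T : ℝ → ℝ} {c : ℝ} (hT : IsUnimodal T c) (M : ℕ) (w : List Bool) :
    ∀ x y : ℝ, x ∈ Set.Icc (0:ℝ) 1 → y ∈ Set.Icc (0:ℝ) 1 → adm T c w x → adm T c w y → x ≤ y →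
      sg T M w x ≤ sg T M w y ∧ (sg T M w x = sg T M w y →
        ∀ k < w.length, ⌊(M : ℝ) * T^[k] x⌋ = ⌊(M : ℝ) * T^[k] y⌋) := by
  obtain ⟨-, hmap, -, hc0, hc1, hmono, hanti⟩ := hT
  induction w with
  | nil => intro x y _ _ _ _ _; simp [sg]
  | cons s w ih =>
    intro x y hx hy hax hay hxy
    obtain ⟨hx1, hx2, hx3⟩ := hax
    obtain ⟨hy1, hy2, hy3⟩ := hay
    have hfl : ⌊(M : ℝ) * x⌋ ≤ ⌊(M : ℝ) * y⌋ := by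
      apply Int.floor_le_floor
      gcongr
    cases s with
    | false =>
      have h1 := hx2 rfl
      have h2 := hy2 rfl
      have hle : T x ≤ T y := hmono.monotoneOn ⟨hx.1, h1⟩ ⟨hy.1, h2⟩ hxy
      obtain ⟨i1, i2⟩ := ih _ _ (hmap hx) (hmap hy) hx3 hy3 hle
      simp only [sg]
      refine ⟨by simp; linarith, fun h => ?_⟩
      simp at h
      intro k hk
      cases k with
      | zero => simp; linarith
      | succ k =>
        simp only [Function.iterate_succ_apply]
        exact i2 (by linarith) k (by simpa using hk)
    | true =>
      have h1 := hx1 rfl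
      have h2 := hy1 rfl
      have hle : T y ≤ T x := hanti.antitoneOn ⟨h1, hx.2⟩ ⟨h2, hy.2⟩ hxy
      obtain ⟨i1, i2⟩ := ih _ _ (hmap hy) (hmap hx) hy3 hx3 hle
      simp only [sg]
      refine ⟨by simp; linarith, fun h => ?_⟩
      simp at h
      intro k hk
      cases k with
      | zero => simp; linarith
      | succ k =>
        simp only [Function.iterate_succ_apply]
        exact (i2 (by linarith) k (by simpa using hk)).symm

lemma sg_eq {T : ℝ → ℝ} {c : ℝ} (hT : IsUnimodal T c) (M : ℕ) (w : List Bool)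
    (x y : ℝ) (hx : x ∈ Set.Icc (0:ℝ) 1) (hy : y ∈ Set.Icc (0:ℝ) 1) (hax : adm T c w x)
    (hay : adm T c w y) (h : sg T M w x = sg T M w y) :
    ∀ k < w.length, ⌊(M : ℝ) * T^[k] x⌋ = ⌊(M : ℝ) * T^[k] y⌋ := by
  rcases le_total x y with hxy | hxy
  · exact (sg_mono hT M w x y hx hy hax hay hxy).2 h
  · intro k hk
    exact ((sg_mono hT M w y x hy hx hay hax hxy).2 h.symm k hk).symm

lemma sg_bound {T : ℝ → ℝ} {c : ℝ} (hT : IsUnimodal T c) (M : ℕ) (w : List Bool) :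
    ∀ x ∈ Set.Icc (0:ℝ) 1, |sg T M w x| ≤ (w.length * M : ℕ) := by
  obtain ⟨-, hmap, -, hc0, hc1, hmono, hanti⟩ := hT
  induction w with
  | nil => intro x _; simp [sg]
  | cons s w ih =>
    intro x hx
    have h1 := ih _ (hmap hx)
    have h2 : 0 ≤ ⌊(M : ℝ) * x⌋ := Int.floor_nonneg.2 (mul_nonneg (by positivity) hx.1)
    have h3 : ⌊(M : ℝ) * x⌋ ≤ M := by
      have : (⌊(M : ℝ) * x⌋ : ℝ) ≤ M := (Int.floor_le _).trans
        (mul_le_of_le_one_right (by positivity) hx.2)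
      exact_mod_cast this
    rw [abs_le] at *
    push_cast at *
    simp only [sg, List.length_cons]
    push_cast
    cases s <;> simp <;> constructor <;> nlinarith [h1.1, h1.2]

lemma exists_cover {T : ℝ → ℝ} {c : ℝ} (hT : IsUnimodal T c) {n m : ℕ}
    (hC : Cov T c (Set.Icc 0 1) n m) (M : ℕ) (hM : 0 < M) :
    ∃ s : Finset ℝ, s.card ≤ m * (2 * (n * M) + 1) ∧ ∀ x ∈ Set.Icc (0:ℝ) 1, ∃ y ∈ s,
      ∀ k < n, dist (T^[k] x) (T^[k] y) < 1 / M := by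
  classical
  obtain ⟨W, hWc, hWl, hW⟩ := hC
  let P : List Bool × ℤ → ℝ → Prop := fun p y =>
    y ∈ Set.Icc (0:ℝ) 1 ∧ adm T c p.1 y ∧ sg T M p.1 y = p.2
  let g : List Bool × ℤ → ℝ := fun p => if h : ∃ y, P p y then h.choose else 0
  refine ⟨(W ×ˢ Finset.Icc (-((n * M : ℕ) : ℤ)) ((n * M : ℕ) : ℤ)).image g, ?_, ?_⟩
  · refine Finset.card_image_le.trans ?_
    rw [Finset.card_product]
    refine Nat.mul_le_mul hWc ?_
    rw [Int.card_Icc]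
    omega
  · intro x hx
    obtain ⟨w, hw, hax⟩ := hW x hx
    have hex : ∃ y, P (w, sg T M w x) y := ⟨x, hx, hax, rfl⟩
    have hg : g (w, sg T M w x) = hex.choose := dif_pos hex
    have hsp := hex.choose_spec
    rw [← hg] at hsp
    obtain ⟨hy, hay, hs⟩ := hsp
    refine ⟨g (w, sg T M w x), ?_, ?_⟩
    · apply Finset.mem_image_of_mem
      have := sg_bound hT M w x hx
      rw [hWl w hw, abs_le] at this
      simp only [Finset.mem_product, Finset.mem_Icc]
      exact ⟨hw, this⟩
    · intro k hk
      have := sg_eq hT M w _ _ hx hy hax hay hs.symm k (by rw [hWl w hw]; exact hk)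
      have h2 := Int.abs_sub_lt_one_of_floor_eq_floor this
      have hM' : (0:ℝ) < M := by exact_mod_cast hM
      rw [← mul_sub, abs_mul, abs_of_pos hM'] at h2
      rw [Real.dist_eq, lt_div_iff₀ hM']
      linarith

lemma growth (M : ℕ) (η : ℝ) (hη : 0 < η) : ∃ n : ℕ, n ≠ 0 ∧
    Real.log ((8 * (n + 1) * 2 ^ (n / 2) * (2 * (n * M) + 1) : ℕ) : ℝ) / n
      ≤ Real.log (Real.sqrt 2) + η := by
  have h1 : Filter.Tendsto (fun n : ℕ => (Real.log (16 * (2 * M + 1)) / n + 2 * (Real.log n / n)))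
      Filter.atTop (nhds (0 + 2 * 0)) := by
    apply Filter.Tendsto.add
    · exact tendsto_const_div_atTop_nhds_zero_nat _
    · apply Filter.Tendsto.const_mul
      have := Real.isLittleO_log_id_atTop.tendsto_div_nhds_zero
      exact this.comp tendsto_natCast_atTop_atTop
  have h2 := (h1.eventually (gt_mem_nhds (show 0 + 2 * 0 < η by simpa using hη))).and
    (Filter.eventually_ge_atTop 1)
  obtain ⟨n, hn, hn1⟩ := h2.exists
  refine ⟨n, by omega, ?_⟩
  have hn1' : (1:ℝ) ≤ n := by exact_mod_cast hn1
  have hn0 : (0:ℝ) < n := by linarith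
  have hM0 : (0:ℝ) ≤ M := by positivity
  have hs : (1:ℝ) ≤ Real.sqrt 2 := by
    rw [Real.one_le_sqrt]; norm_num
  have hp : (2:ℝ) ^ (n / 2) ≤ Real.sqrt 2 ^ n := by
    calc (2:ℝ) ^ (n / 2) = Real.sqrt 2 ^ (2 * (n / 2)) := by
          rw [pow_mul, Real.sq_sqrt (by norm_num)]
      _ ≤ _ := pow_le_pow_right₀ hs (by omega)
  have hle : ((8 * (n + 1) * 2 ^ (n / 2) * (2 * (n * M) + 1) : ℕ) : ℝ) ≤
      (16 * (2 * M + 1)) * (n * n) * Real.sqrt 2 ^ n := by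
    push_cast
    calc (8 * ((n:ℝ) + 1) * 2 ^ (n / 2) * (2 * (n * M) + 1))
        = (8 * ((n:ℝ) + 1) * (2 * (n * M) + 1)) * 2 ^ (n / 2) := by ring
      _ ≤ ((16 * (2 * M + 1)) * (n * n)) * Real.sqrt 2 ^ n := by
          apply mul_le_mul _ hp (by positivity) (by positivity)
          have : 2 * ((n:ℝ) * M) + 1 ≤ (2 * M + 1) * n := by nlinarith
          calc 8 * ((n:ℝ) + 1) * (2 * (n * M) + 1) ≤ (16 * n) * ((2 * M + 1) * n) := by
                apply mul_le_mul _ this (by positivity) (by positivity)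
                linarith
            _ = _ := by ring
  have hpos : (0:ℝ) < ((8 * (n + 1) * 2 ^ (n / 2) * (2 * (n * M) + 1) : ℕ) : ℝ) := by positivity
  have hlog := Real.log_le_log hpos hle
  rw [Real.log_mul (by positivity) (by positivity), Real.log_mul (by positivity) (by positivity),
    Real.log_mul hn0.ne' hn0.ne', Real.log_pow] at hlog
  rw [div_le_iff₀ hn0]
  have h3 : (Real.log (16 * (2 * M + 1)) / n + 2 * (Real.log n / n)) * n =
      Real.log (16 * (2 * M + 1)) + (Real.log n + Real.log n) := by
    field_simp; ring
  have h4 := mul_lt_mul_of_pos_right hn hn0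
  rw [h3] at h4
  linarith

lemma entropy_le {T : ℝ → ℝ} {c : ℝ} (hT : IsUnimodal T c)
    (hC : ∀ n, Cov T c (Set.Icc 0 1) n (8 * (n + 1) * 2 ^ (n / 2))) :
    Dynamics.coverEntropy T (Set.Icc 0 1) ≤ (Real.log (Real.sqrt 2) : EReal) := by
  refine iSup₂_le fun U hU => ?_
  obtain ⟨V, hV, hVs, hVU⟩ := comp_symm_mem_uniformity_sets hU
  obtain ⟨δ, hδ, hδV⟩ := Metric.mem_uniformity_dist.1 hV
  obtain ⟨M0, hM0⟩ := exists_nat_one_div_lt hδ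
  have := hVs
  refine (Dynamics.coverEntropyEntourage_antitone T _ hVU).trans ?_
  refine EReal.le_of_forall_lt_iff_le.1 fun z hz => ?_
  have hz' : Real.log (Real.sqrt 2) < z := by exact_mod_cast hz
  obtain ⟨n, hn0, hn⟩ := growth (M0 + 1) (z - Real.log (Real.sqrt 2)) (by linarith)
  obtain ⟨s, hsc, hs⟩ := exists_cover hT (hC n) (M0 + 1) (by omega)
  have hcov : Dynamics.IsDynCoverOf T (Set.Icc 0 1) V n (s : Set ℝ) := by
    intro x hx
    obtain ⟨y, hy, hxy⟩ := hs x hx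
    refine ⟨y, hy, ?_⟩
    refine Dynamics.mem_dynEntourage.2 fun k hk => ?_
    apply hδV
    have := hxy k hk
    push_cast at this
    exact this.trans hM0
  refine (hcov.coverEntropyEntourage_le_log_card_div hT.2.1 hn0).trans ?_
  have hsp : 0 < s.card := by
    obtain ⟨y, hy, -⟩ := hs 0 (by simp)
    exact Finset.card_pos.2 ⟨y, hy⟩
  have hl : ENNReal.log (s.card : ENNReal) = ((Real.log s.card : ℝ) : EReal) := by
    rw [← ENNReal.ofReal_natCast, ENNReal.log_ofReal_of_pos (by exact_mod_cast hsp)]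
  rw [hl]
  have : ((Real.log s.card : ℝ) : EReal) / (n : EReal) = ((Real.log s.card / n : ℝ) : EReal) := by
    rw [EReal.coe_div]; rfl
  rw [this, EReal.coe_le_coe_iff]
  refine le_trans ?_ (hn.trans (by linarith))
  gcongr

lemma cov_mono {T : ℝ → ℝ} {c : ℝ} {S : Set ℝ} {n m m' : ℕ} (h : Cov T c S n m) (hm : m ≤ m') :
    Cov T c S n m' := by
  obtain ⟨W, h1, h2, h3⟩ := h
  exact ⟨W, h1.trans hm, h2, h3⟩

lemma cov_subset {T : ℝ → ℝ} {c : ℝ} {S S' : Set ℝ} {n m : ℕ} (h : Cov T c S n m) (hm : S' ⊆ S) :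
    Cov T c S' n m := by
  obtain ⟨W, h1, h2, h3⟩ := h
  exact ⟨W, h1, h2, fun x hx => h3 x (hm hx)⟩

lemma cov_union {T : ℝ → ℝ} {c : ℝ} {S S' : Set ℝ} {n m m' : ℕ} (h : Cov T c S n m)
    (h' : Cov T c S' n m') : Cov T c (S ∪ S') n (m + m') := by
  classical
  obtain ⟨W, h1, h2, h3⟩ := h
  obtain ⟨W', h1', h2', h3'⟩ := h'
  refine ⟨W ∪ W', (Finset.card_union_le _ _).trans (by omega), ?_, ?_⟩
  · intro w hw
    rcases Finset.mem_union.1 hw with hw | hw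
    · exact h2 w hw
    · exact h2' w hw
  · rintro x (hx | hx)
    · obtain ⟨w, hw, ha⟩ := h3 x hx
      exact ⟨w, Finset.mem_union_left _ hw, ha⟩
    · obtain ⟨w, hw, ha⟩ := h3' x hx
      exact ⟨w, Finset.mem_union_right _ hw, ha⟩

lemma cov_zero (T : ℝ → ℝ) (c : ℝ) (S : Set ℝ) {m : ℕ} (hm : 1 ≤ m) : Cov T c S 0 m :=
  ⟨{[]}, by simpa using hm, by simp, fun x _ => ⟨[], by simp, trivial⟩⟩

lemma cov_side {T : ℝ → ℝ} {c : ℝ} {S S' : Set ℝ} {n m : ℕ} (s : Bool)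
    (hs : ∀ x ∈ S, (s = true → c ≤ x) ∧ (s = false → x ≤ c)) (hm : Set.MapsTo T S S')
    (h : Cov T c S' n m) : Cov T c S (n + 1) m := by
  classical
  obtain ⟨W, h1, h2, h3⟩ := h
  refine ⟨W.image (fun w => s :: w), Finset.card_image_le.trans h1, ?_, ?_⟩
  · intro w hw
    obtain ⟨v, hv, rfl⟩ := Finset.mem_image.1 hw
    simp [h2 v hv]
  · intro x hx
    obtain ⟨w, hw, ha⟩ := h3 _ (hm hx)
    exact ⟨s :: w, Finset.mem_image_of_mem _ hw, (hs x hx).1, (hs x hx).2, ha⟩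

/-- `S` lies on one side of `c` -/
def OneSided (c : ℝ) (S : Set ℝ) : Prop := S ⊆ Set.Iic c ∨ S ⊆ Set.Ici c

lemma cov_oneSided {T : ℝ → ℝ} {c : ℝ} {S S' : Set ℝ} {n m : ℕ} (hs : OneSided c S)
    (hm : Set.MapsTo T S S') (h : Cov T c S' n m) : Cov T c S (n + 1) m := by
  rcases hs with hs | hs
  · exact cov_side false (fun x hx => ⟨by simp, fun _ => hs hx⟩) hm h
  · exact cov_side true (fun x hx => ⟨fun _ => hs hx, by simp⟩) hm h

lemma cov_both {T : ℝ → ℝ} {c : ℝ} {S S' : Set ℝ} {n m : ℕ}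
    (hm : Set.MapsTo T S S') (h : Cov T c S' n m) : Cov T c S (n + 1) (2 * m) := by
  have h1 : Cov T c (S ∩ Set.Iic c) (n + 1) m :=
    cov_oneSided (Or.inl Set.inter_subset_right) (hm.mono_left Set.inter_subset_left) h
  have h2 : Cov T c (S ∩ Set.Ici c) (n + 1) m :=
    cov_oneSided (Or.inr Set.inter_subset_right) (hm.mono_left Set.inter_subset_left) h
  refine cov_subset (cov_mono (cov_union h1 h2) (by omega)) ?_
  intro x hx
  rcases le_total x c with h | h
  · exact Or.inl ⟨hx, h⟩
  · exact Or.inr ⟨hx, h⟩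

lemma cov_seq {T : ℝ → ℝ} {c : ℝ} (E : ℕ → Set ℝ) (hE : ∀ k, Set.MapsTo T (E (k + 1)) (E k))
    (h1 : ∀ k, OneSided c (E k) ∨ OneSided c (E (k + 1))) :
    ∀ k, Cov T c (E k) k (2 * 2 ^ (k / 2)) ∧ Cov T c (E (k + 1)) (k + 1) (2 * 2 ^ ((k + 1) / 2)) := by
  have step : ∀ k m, Cov T c (E k) k m → Cov T c (E (k + 2)) (k + 2) (2 * m) := by
    intro k m h
    rcases h1 (k + 1) with hs | hs
    · exact cov_both (hE (k + 1)) (cov_oneSided hs (hE k) h)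
    · exact cov_oneSided hs (hE (k + 1)) (cov_both (hE k) h)
  intro k
  induction k with
  | zero =>
    refine ⟨cov_zero _ _ _ (by simp), ?_⟩
    have := cov_both (hE 0) (cov_zero T c (E 0) le_rfl)
    simpa using this
  | succ k ih =>
    refine ⟨ih.2, ?_⟩
    refine cov_mono (step k _ ih.1) ?_
    rw [show (k + 1 + 1) / 2 = k / 2 + 1 by omega, pow_succ]
    omega

lemma entropy_le_of_seq {T : ℝ → ℝ} {c : ℝ} (hT : IsUnimodal T c) (a₀ b₀ : ℝ) (ha : a₀ ≤ c)
    (hb : c ≤ b₀) (hb1 : b₀ ≤ 1) (hTb : ∀ x ∈ Set.Icc (0:ℝ) 1, T x ≤ b₀)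
    (E F : ℕ → Set ℝ) (hEF : ∀ k, Set.Icc a₀ b₀ ⊆ E k ∪ F k)
    (hE : ∀ k, Set.MapsTo T (E (k + 1)) (E k)) (hF : ∀ k, Set.MapsTo T (F (k + 1)) (F k))
    (hE1 : ∀ k, OneSided c (E k) ∨ OneSided c (E (k + 1)))
    (hF1 : ∀ k, OneSided c (F k) ∨ OneSided c (F (k + 1))) :
    Dynamics.coverEntropy T (Set.Icc 0 1) ≤ (Real.log (Real.sqrt 2) : EReal) := by
  have hI : ∀ k, Cov T c (Set.Icc a₀ b₀) k (4 * 2 ^ (k / 2)) := fun k =>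
    cov_subset (cov_mono (cov_union (cov_seq E hE hE1 k).1 (cov_seq F hF hF1 k).1)
      (by omega)) (hEF k)
  have hmap : Set.MapsTo T (Set.Icc 0 1) (Set.Icc 0 b₀) := fun x hx =>
    ⟨(hT.2.1 hx).1, hTb x hx⟩
  have hJ : ∀ k, Cov T c (Set.Icc 0 b₀) k (4 * (k + 1) * 2 ^ (k / 2)) := by
    intro k
    induction k with
    | zero => exact cov_zero _ _ _ (by simp)
    | succ k ih =>
      have h1 : Cov T c (Set.Ico 0 a₀) (k + 1) (4 * (k + 1) * 2 ^ (k / 2)) :=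
        cov_oneSided (Or.inl fun x hx => hx.2.le.trans ha)
          (hmap.mono_left fun x hx => ⟨hx.1, by linarith [hx.2]⟩) ih
      refine cov_subset (cov_mono (cov_union h1 (hI (k + 1))) ?_) ?_
      · have : 2 ^ (k / 2) ≤ 2 ^ ((k + 1) / 2) := Nat.pow_le_pow_right (by norm_num) (by omega)
        nlinarith
      · intro x hx
        rcases lt_or_ge x a₀ with h | h
        · exact Or.inl ⟨hx.1, h⟩
        · exact Or.inr ⟨h, hx.2⟩
  refine entropy_le hT fun n => ?_
  cases n with
  | zero => exact cov_zero _ _ _ (by simp)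
  | succ k =>
    have h1 : Cov T c (Set.Ioc b₀ 1) (k + 1) (4 * (k + 1) * 2 ^ (k / 2)) :=
      cov_oneSided (Or.inr fun x hx => hb.trans hx.1.le)
        (hmap.mono_left fun x hx => ⟨by linarith [hx.1, hT.2.2.2.1], hx.2⟩) (hJ k)
    refine cov_subset (cov_mono (cov_union h1 (hJ (k + 1))) ?_) ?_
    · have : 2 ^ (k / 2) ≤ 2 ^ ((k + 1) / 2) := Nat.pow_le_pow_right (by norm_num) (by omega)
      generalize 2 ^ (k / 2) = u at *
      generalize 2 ^ ((k + 1) / 2) = v at *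
      have h5 := Nat.mul_le_mul_left (4 * (k + 1)) this
      linarith [Nat.zero_le v]
    · intro x hx
      rcases lt_or_ge b₀ x with h | h
      · exact Or.inl ⟨h, hx.2⟩
      · exact Or.inr ⟨hx.1, h⟩

lemma lift_point {T : ℝ → ℝ} {c : ℝ}
    (hsurj : ∀ x ∈ Set.Icc (T (T c)) (T c), ∃ y ∈ Set.Icc (T (T c)) (T c), T y = x)
    (n : ℕ) (x : ℝ) (hx : ∀ k ≤ n, T^[k] x ∈ Set.Icc (T (T c)) (T c)) :
    ∃ y ∈ coreInvLimitSet T c, y n = x := by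
  choose! g hg hTg using hsurj
  have hgi : ∀ k, g^[k] x ∈ Set.Icc (T (T c)) (T c) := by
    intro k
    induction k with
    | zero => exact hx 0 (by omega)
    | succ k ih => rw [Function.iterate_succ_apply']; exact hg _ ih
  refine ⟨fun k => if k ≤ n then T^[n - k] x else g^[k - n] x, ⟨?_, ?_⟩, by simp⟩
  · intro k
    dsimp only
    split_ifs with h
    · exact hx _ (by omega)
    · exact hgi _
  · intro k
    dsimp only
    rcases lt_trichotomy k n with h | h | h
    · rw [if_pos (by omega), if_pos (by omega), ← Function.iterate_succ_apply' T]
      congr 2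
      omega
    · subst h
      rw [if_neg (by omega), if_pos le_rfl]
      simpa using hTg x (hx 0 (by omega))
    · rw [if_neg (by omega), if_neg (by omega), show k + 1 - n = (k - n) + 1 by omega,
        Function.iterate_succ_apply']
      exact hTg _ (hgi _)

lemma back_eq {T : ℝ → ℝ} {c : ℝ} {x y : ℕ → ℝ} (hx : x ∈ coreInvLimitSet T c)
    (hy : y ∈ coreInvLimitSet T c) (n : ℕ) (h : x n = y n) : ∀ k ≤ n, x k = y k := by
  intro k hk
  obtain ⟨j, rfl⟩ := Nat.exists_eq_add_of_le hk
  clear hk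
  induction j with
  | zero => exact h
  | succ j ih =>
    apply ih
    rw [← hx.2, ← hy.2]
    exact congrArg T h

lemma ordConn {A : Set (ℕ → ℝ)} (hA : IsConnected A) (n : ℕ) :
    Set.OrdConnected ((fun y : ℕ → ℝ => y n) '' A) :=
  (hA.isPreconnected.image _ (continuous_apply n).continuousOn).ordConnected

/-- if the projections of a closed set are all full, it is everything -/
lemma proj_ne {T : ℝ → ℝ} {c : ℝ} {A : Set (ℕ → ℝ)} (hAK : A ⊆ coreInvLimitSet T c)
    (hA : IsCompact A) (hne : A ≠ coreInvLimitSet T c) :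
    ∃ N, ¬ Set.Icc (T (T c)) (T c) ⊆ (fun y : ℕ → ℝ => y N) '' A := by
  by_contra! hcon
  apply hne
  refine hAK.antisymm fun x hx => ?_
  have : ∀ n, ∃ y ∈ A, y n = x n := fun n => hcon n (hx.1 n)
  choose y hy hyx using this
  refine hA.isClosed.mem_of_tendsto (f := y) (b := Filter.atTop) ?_
    (Filter.Eventually.of_forall hy)
  rw [tendsto_pi_nhds]
  intro k
  refine tendsto_const_nhds.congr' ?_
  filter_upwards [Filter.eventually_ge_atTop k] with n hn
  exact (back_eq (hAK (hy n)) hx n (hyx n) k hn).symm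

set_option maxHeartbeats 1000000 in
/-- If `T` is a unimodal map with `exp(h_top(T)) > √2` (equivalently,
`h_top(T) > log √2`), then the core inverse limit space `X'` is indecomposable. -/
theorem stmt2 (T : ℝ → ℝ) (c : ℝ) (hT : IsUnimodal T c)
    (hent : (Real.log (Real.sqrt 2) : EReal) < Dynamics.coverEntropy T (Set.Icc 0 1)) :
    IsIndecomposable (coreInvLimitSet T c) := by
  have hT' := hT
  obtain ⟨hcont, hmap, h0, hc0, hc1, hmono, hanti⟩ := hT'
  have hle : ∀ x ∈ Set.Icc (0:ℝ) 1, T x ≤ T c := by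
    intro x hx
    rcases le_total x c with h | h
    · exact hmono.monotoneOn ⟨hx.1, h⟩ ⟨hc0.le, le_rfl⟩ h
    · exact hanti.antitoneOn ⟨le_rfl, hc1.le⟩ ⟨h, hx.2⟩ h
  have hb01 := hmap (show c ∈ Set.Icc (0:ℝ) 1 from ⟨hc0.le, hc1.le⟩)
  have ha01 := hmap hb01
  have hab := hle _ hb01
  set b := T c with hb
  set a := T b with ha
  -- trivial dynamics
  rcases lt_or_ge b c with hbc | hbc
  · exfalso
    refine absurd hent (not_lt.2 (entropy_le_of_seq hT 0 c hc0.le le_rfl hc1.le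
      (fun x hx => (hle x hx).trans hbc.le) (fun _ => Set.Icc 0 c) (fun _ => Set.Icc 0 c)
      (fun k => by simp) ?_ ?_ ?_ ?_))
    · exact fun _ x hx => ⟨(hmap ⟨hx.1, hx.2.trans hc1.le⟩).1,
        (hle x ⟨hx.1, hx.2.trans hc1.le⟩).trans hbc.le⟩
    · exact fun _ x hx => ⟨(hmap ⟨hx.1, hx.2.trans hc1.le⟩).1,
        (hle x ⟨hx.1, hx.2.trans hc1.le⟩).trans hbc.le⟩
    · exact fun _ => Or.inl (Or.inl fun x hx => hx.2)
    · exact fun _ => Or.inl (Or.inl fun x hx => hx.2)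
  have hRmap : ∀ x ∈ Set.Icc c b, T x ∈ Set.Icc a b := fun x hx =>
    ⟨hanti.antitoneOn ⟨hx.1, hx.2.trans hb01.2⟩ ⟨hbc, hb01.2⟩ hx.2,
      hle x ⟨hc0.le.trans hx.1, hx.2.trans hb01.2⟩⟩
  rcases le_or_gt c a with hca | hac
  · exfalso
    have hm : Set.MapsTo T (Set.Icc c b) (Set.Icc c b) := fun x hx =>
      ⟨hca.trans (hRmap x hx).1, (hRmap x hx).2⟩
    exact absurd hent (not_lt.2 (entropy_le_of_seq hT c b le_rfl hbc hb01.2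
      hle (fun _ => Set.Icc c b) (fun _ => Set.Icc c b)
      (fun k => by simp) (fun _ => hm) (fun _ => hm) (fun _ => Or.inl (Or.inr fun x hx => hx.1))
      (fun _ => Or.inl (Or.inr fun x hx => hx.1))))
  have hcb : c < b := by
    rcases hbc.lt_or_eq with h | h
    · exact h
    · exfalso
      have : a = b := by rw [ha, ← h, ← hb, ← h]
      linarith
  -- intermediate value theorem on subintervals of `[0,1]`
  have hivt : ∀ u v : ℝ, 0 ≤ u → u ≤ v → v ≤ 1 → ∀ z, T v ≤ z → z ≤ T u →
      ∃ y ∈ Set.Icc u v, T y = z := by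
    intro u v hu huv hv z h1 h2
    exact intermediate_value_Icc' huv (hcont.mono (Set.Icc_subset_Icc hu hv)) ⟨h1, h2⟩
  have hsurjR : ∀ x ∈ Set.Icc a b, ∃ y ∈ Set.Icc c b, T y = x := fun x hx =>
    hivt c b hc0.le hbc hb01.2 x hx.1 hx.2
  have hsurj : ∀ x ∈ Set.Icc a b, ∃ y ∈ Set.Icc a b, T y = x := fun x hx => by
    obtain ⟨y, hy, h⟩ := hsurjR x hx
    exact ⟨y, ⟨hac.le.trans hy.1, hy.2⟩, h⟩
  rintro ⟨A, B, hAK, hBK, hAc, hAcon, hBc, hBcon, hAne, hBne, hAB⟩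
  rcases lt_or_ge (T a) a with hTa | hTa
  · -- the core interval is not invariant: the inverse limit has at least three components
    obtain ⟨p, hp, hpp⟩ : ∃ p ∈ Set.Icc c b, T p = p := by
      obtain ⟨p, hp, hpe⟩ := intermediate_value_Icc' (f := fun x => T x - x) hbc
        ((hcont.mono (Set.Icc_subset_Icc hc0.le hb01.2)).sub continuousOn_id)
        (show (0:ℝ) ∈ _ from ⟨by linarith, by linarith⟩)
      exact ⟨p, hp, by simp only at hpe; linarith⟩
    have hpc : c < p := by
      rcases hp.1.lt_or_eq with h | h
      · exact h
      · rw [← h, ← hb] at hpp; linarith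
    obtain ⟨p', hp', hpp'⟩ : ∃ p' ∈ Set.Icc a c, T p' = p := by
      obtain ⟨y, hy, h⟩ := intermediate_value_Icc hac.le
        (hcont.mono (Set.Icc_subset_Icc ha01.1 hc1.le)) (show p ∈ _ from ⟨by linarith, hp.2⟩)
      exact ⟨y, hy, h⟩
    have hp'c : p' < c := by
      rcases hp'.2.lt_or_eq with h | h
      · exact h
      · exfalso
        rw [h, ← hb] at hpp'
        rw [← hpp', ← ha] at hpp
        linarith
    obtain ⟨r, hr, hrp⟩ := hivt p b (by linarith) hp.2 hb01.2 p' hp'.1 (by rw [hpp]; linarith)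
    obtain ⟨q, hq, hqc⟩ := hivt p r (by linarith [hp.1]) hr.1 (hr.2.trans hb01.2) c
      (by linarith) (by linarith)
    have hpI : p ∈ Set.Icc a b := ⟨by linarith, hp.2⟩
    have hp'I : p' ∈ Set.Icc a b := ⟨hp'.1, by linarith⟩
    have hrI : r ∈ Set.Icc a b := ⟨by linarith [hr.1], hr.2⟩
    have hpi : ∀ k, T^[k] p = p := fun k => Function.iterate_fixed hpp k
    have L1 := lift_point hsurj 4 p (fun k _ => by rw [hpi]; exact hpI)
    have hp'i : ∀ k, T^[k] p' ∈ Set.Icc a b := by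
      intro k
      cases k with
      | zero => exact hp'I
      | succ k => rw [Function.iterate_succ_apply, hpp', hpi]; exact hpI
    have L2 := lift_point hsurj 4 p' (fun k _ => hp'i k)
    have L3 := lift_point hsurj 4 r (fun k _ => by
      cases k with
      | zero => exact hrI
      | succ k => rw [Function.iterate_succ_apply, hrp]; exact hp'i k)
    have nc : ∀ y ∈ coreInvLimitSet T c, y 4 ≠ c := by
      intro y hy h
      have h3 := hy.2 3
      have h2 := hy.2 2
      have h1 := hy.2 1
      have hh := (hy.1 1).1
      norm_num at h3 h2 h1
      rw [h] at h3
      rw [← h1, ← h2, ← h3] at hh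
      linarith
    have nq : ∀ y ∈ coreInvLimitSet T c, y 4 ≠ q := by
      intro y hy h
      have h3 := hy.2 3
      have h2 := hy.2 2
      have h1 := hy.2 1
      have h0 := hy.2 0
      have hh := (hy.1 0).1
      norm_num at h3 h2 h1 h0
      rw [h, hqc] at h3
      rw [← h0, ← h1, ← h2, ← h3] at hh
      linarith
    have key : ∀ C : Set (ℕ → ℝ), C ⊆ coreInvLimitSet T c → IsConnected C →
        ∀ y ∈ C, ∀ z ∈ C, ¬ (y 4 ≤ c ∧ c ≤ z 4) ∧ ¬ (y 4 ≤ q ∧ q ≤ z 4) := by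
      intro C hCK hC y hy z hz
      have hoc := ordConn hC 4
      constructor
      · intro h
        obtain ⟨x, hx, hx4⟩ := hoc.out ⟨y, hy, rfl⟩ ⟨z, hz, rfl⟩ h
        exact nc x (hCK hx) hx4
      · intro h
        obtain ⟨x, hx, hx4⟩ := hoc.out ⟨y, hy, rfl⟩ ⟨z, hz, rfl⟩ h
        exact nq x (hCK hx) hx4
    obtain ⟨y1, hy1, e1⟩ := L1
    obtain ⟨y2, hy2, e2⟩ := L2
    obtain ⟨y3, hy3, e3⟩ := L3
    have k21 : y2 4 ≤ c ∧ c ≤ y1 4 := ⟨by linarith, by linarith⟩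
    have k23 : y2 4 ≤ c ∧ c ≤ y3 4 := ⟨by linarith, by linarith [hr.1]⟩
    have k13 : y1 4 ≤ q ∧ q ≤ y3 4 := ⟨by linarith [hq.1], by linarith [hq.2]⟩
    have key2 : ∀ C : Set (ℕ → ℝ), C ⊆ coreInvLimitSet T c → IsConnected C →
        ¬ (y2 ∈ C ∧ y1 ∈ C) ∧ ¬ (y2 ∈ C ∧ y3 ∈ C) ∧ ¬ (y1 ∈ C ∧ y3 ∈ C) :=
      fun C hCK hC => ⟨fun h => (key C hCK hC _ h.1 _ h.2).1 k21,
        fun h => (key C hCK hC _ h.1 _ h.2).1 k23, fun h => (key C hCK hC _ h.1 _ h.2).2 k13⟩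
    have kA := key2 A hAK hAcon
    have kB := key2 B hBK hBcon
    rw [← hAB, Set.mem_union] at hy1 hy2 hy3
    tauto
  · -- invariant core
    have hI : Set.MapsTo T (Set.Icc a b) (Set.Icc a b) := by
      intro x hx
      rcases le_total x c with h | h
      · exact ⟨hTa.trans (hmono.monotoneOn ⟨ha01.1, hac.le⟩ ⟨ha01.1.trans hx.1, h⟩ hx.1),
          hle x ⟨ha01.1.trans hx.1, hx.2.trans hb01.2⟩⟩
      · exact hRmap x ⟨h, hx.2⟩
    have hlift : ∀ n, ∀ x ∈ Set.Icc a b, ∃ y ∈ coreInvLimitSet T c, y n = x := fun n x hx =>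
      lift_point hsurj n x (fun k _ => hI.iterate k hx)
    let P : Set (ℕ → ℝ) → ℕ → Set ℝ := fun C n => (fun y : ℕ → ℝ => y n) '' C
    have hPsub : ∀ C, C ⊆ coreInvLimitSet T c → ∀ n, P C n ⊆ Set.Icc a b := by
      rintro C hC n _ ⟨y, hy, rfl⟩
      exact (hC hy).1 n
    have hPmap : ∀ C, C ⊆ coreInvLimitSet T c → ∀ n, Set.MapsTo T (P C (n + 1)) (P C n) := by
      rintro C hC n _ ⟨y, hy, rfl⟩
      exact ⟨y, hy, ((hC hy).2 n).symm⟩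
    have hPun : ∀ n, Set.Icc a b ⊆ P A n ∪ P B n := by
      intro n x hx
      obtain ⟨y, hy, rfl⟩ := hlift n x hx
      rw [← hAB] at hy
      rcases hy with hy | hy
      · exact Or.inl ⟨y, hy, rfl⟩
      · exact Or.inr ⟨y, hy, rfl⟩
    have hPne : ∀ C, C ⊆ coreInvLimitSet T c → IsCompact C → IsConnected C →
        C ≠ coreInvLimitSet T c → ∃ N, ∀ n ≥ N, ¬ (a ∈ P C n ∧ b ∈ P C n) := by
      intro C hCK hCc hC hne
      obtain ⟨N, hN⟩ := proj_ne hCK hCc hne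
      refine ⟨N, fun n hn h => hN ?_⟩
      have hfull : Set.Icc a b ⊆ P C n := (ordConn hC n).out h.1 h.2
      obtain ⟨j, rfl⟩ := Nat.exists_eq_add_of_le hn
      clear hn h
      induction j with
      | zero => exact hfull
      | succ j ih =>
        apply ih
        intro x hx
        obtain ⟨y, hy, rfl⟩ := hsurj x hx
        exact hPmap C hCK _ (hfull hy)
    obtain ⟨N1, hN1⟩ := hPne A hAK hAc hAcon hAne
    obtain ⟨N2, hN2⟩ := hPne B hBK hBc hBcon hBne
    obtain ⟨N, hNa, hNb⟩ : ∃ N, N1 ≤ N ∧ N2 ≤ N := ⟨_, le_max_left _ _, le_max_right _ _⟩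
    have hnA : ∀ k, ¬ (a ∈ P A (N + k) ∧ b ∈ P A (N + k)) := fun k =>
      hN1 _ (by omega)
    have hnB : ∀ k, ¬ (a ∈ P B (N + k) ∧ b ∈ P B (N + k)) := fun k =>
      hN2 _ (by omega)
    have hua : ∀ n, a ∈ P A n ∨ a ∈ P B n := fun n => hPun n ⟨le_rfl, hab⟩
    have hub : ∀ n, b ∈ P A n ∨ b ∈ P B n := fun n => hPun n ⟨hab, le_rfl⟩
    have hcb' : ∀ C, C ⊆ coreInvLimitSet T c → ∀ n, c ∈ P C (n + 1) → b ∈ P C n :=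
      fun C hC n h => hPmap C hC n h
    have hba' : ∀ C, C ⊆ coreInvLimitSet T c → ∀ n, b ∈ P C (n + 1) → a ∈ P C n :=
      fun C hC n h => hPmap C hC n h
    have hright : ∀ C, C ⊆ coreInvLimitSet T c → IsConnected C → ∀ n,
        ¬ (a ∈ P C n ∧ b ∈ P C n) → b ∈ P C (n + 1) → OneSided c (P C (n + 1)) := by
      intro C hCK hC n hn h
      refine Or.inr fun x hx => ?_
      by_contra hxc
      have hxc' : x < c := not_le.1 hxc
      have : c ∈ P C (n + 1) := (ordConn hC (n + 1)).out hx h ⟨hxc'.le, hbc⟩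
      exact hn ⟨hba' C hCK n h, hcb' C hCK n this⟩
    have hsA : ∀ k, OneSided c (P A (N + 1 + k)) ∨ OneSided c (P A (N + 1 + (k + 1))) := by
      intro k
      have r1 := hright A hAK hAcon (N + k) (hnA k)
      have r2 := hright A hAK hAcon (N + k + 1) (hnA (k + 1))
      have e1 : N + 1 + k = N + k + 1 := by omega
      have e2 : N + 1 + (k + 1) = N + k + 1 + 1 := by omega
      rw [e1, e2]
      have b1 := hba' B hBK (N + k + 1)
      have nB := hnB (k + 1)
      rw [show N + (k + 1) = N + k + 1 by omega] at nB
      have u1 := hub (N + k + 1)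
      have u2 := hub (N + k + 1 + 1)
      tauto
    have hsB : ∀ k, OneSided c (P B (N + 1 + k)) ∨ OneSided c (P B (N + 1 + (k + 1))) := by
      intro k
      have r1 := hright B hBK hBcon (N + k) (hnB k)
      have r2 := hright B hBK hBcon (N + k + 1) (hnB (k + 1))
      have e1 : N + 1 + k = N + k + 1 := by omega
      have e2 : N + 1 + (k + 1) = N + k + 1 + 1 := by omega
      rw [e1, e2]
      have b1 := hba' A hAK (N + k + 1)
      have nA := hnA (k + 1)
      rw [show N + (k + 1) = N + k + 1 by omega] at nA
      have u1 := hub (N + k + 1)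
      have u2 := hub (N + k + 1 + 1)
      tauto
    exact absurd hent (not_lt.2 (entropy_le_of_seq hT a b hac.le hbc hb01.2 hle
      (fun k => P A (N + 1 + k)) (fun k => P B (N + 1 + k)) (fun k => hPun _)
      (fun k => hPmap A hAK _) (fun k => hPmap B hBK _) hsA hsB))
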